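/- Attribution of cascades to initial failures in the threshold model: assume every vertex of G has at least one neighbor, let Θ = {v, w} with v ≠ w, let Ω = F(Θ), and let Γ_v (respectively Γ_w) be the vertex set of the connected component of v (respectively w) in the subgraph of G induced on Ω. Then Ω = Γ_v ∪ Γ_w. -/

import Mathlib

/-- One-round threshold cascade: the set of vertices outside `S` whose fraction of
failed neighbors meets or exceeds their threshold. -/
def cascade {V : Type*} (G : SimpleGraph V) (φ : V → ℝ) (S : Set V) : Set V :=
  {v | v ∉ S ∧ φ v * (G.neighborSet v).ncard ≤ ((G.neighborSet v ∩ S).ncard : ℝ)}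

/-- The cascade sequence `Ω_0 = Θ`, `Ω_{t+1} = Ω_t ∪ c(Ω_t)`. -/
def omegaSeq {V : Type*} (G : SimpleGraph V) (φ : V → ℝ) (Θ : Set V) : ℕ → Set V
  | 0 => Θ
  | t + 1 => omegaSeq G φ Θ t ∪ cascade G φ (omegaSeq G φ Θ t)

/-- The final failed set `F(Θ) = ⋃_{t ≥ 0} Ω_t`. -/
def finalSet {V : Type*} (G : SimpleGraph V) (φ : V → ℝ) (Θ : Set V) : Set V :=
  ⋃ t, omegaSeq G φ Θ t

/-- The vertex set of the connected component of `v` in the subgraph of `G` induced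
on `Ω`: all vertices of `Ω` reachable from `v` within the induced subgraph. -/
def component {V : Type*} (G : SimpleGraph V) (Ω : Set V) (v : V) : Set V :=
  {x | ∃ (hx : x ∈ Ω) (hv : v ∈ Ω), (G.induce Ω).Reachable ⟨x, hx⟩ ⟨v, hv⟩}

/-!
A vertex that has neighbors meets its positive threshold only if at least one of them has failed.
So every new failure is adjacent to an earlier one, and lies in the same component of the final
failed set; by induction on the round, every failure is connected there to an initial one.
-/

section Component

variable {V : Type*} {G : SimpleGraph V} {Ω : Set V} {u x y : V}

theorem component_subset : component G Ω u ⊆ Ω :=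
  fun _ ⟨hx, _⟩ => hx

theorem mem_component_self (hu : u ∈ Ω) : u ∈ component G Ω u :=
  ⟨hu, hu, .rfl⟩

theorem mem_component_of_adj (hx : x ∈ Ω) (hxy : G.Adj x y) (hy : y ∈ component G Ω u) :
    x ∈ component G Ω u := by
  obtain ⟨hyΩ, hu, hyu⟩ := hy
  have hxy' : (G.induce Ω).Adj ⟨x, hx⟩ ⟨y, hyΩ⟩ := hxy
  exact ⟨hx, hu, hxy'.reachable.trans hyu⟩

end Component

section Cascade

variable {V : Type*} {G : SimpleGraph V} {φ : V → ℝ}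

theorem exists_adj_of_mem_cascade {S : Set V} {x : V} [Finite (G.neighborSet x)]
    (hφ : 0 < φ x) (hdeg : (G.neighborSet x).Nonempty) (hx : x ∈ cascade G φ S) :
    ∃ y ∈ S, G.Adj x y := by
  have hdeg_pos : (0 : ℝ) < (G.neighborSet x).ncard := by
    exact_mod_cast hdeg.ncard_pos
  have hfailed_pos : (0 : ℝ) < (G.neighborSet x ∩ S).ncard :=
    (mul_pos hφ hdeg_pos).trans_le hx.2
  obtain ⟨y, hxy, hy⟩ := Set.nonempty_of_ncard_ne_zero (Nat.cast_pos.mp hfailed_pos).ne'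
  exact ⟨y, hy, hxy⟩

theorem omegaSeq_subset_finalSet (Θ : Set V) (t : ℕ) : omegaSeq G φ Θ t ⊆ finalSet G φ Θ :=
  Set.subset_iUnion (omegaSeq G φ Θ) t

theorem omegaSeq_subset_biUnion_component [∀ x, Finite (G.neighborSet x)]
    (hφ : ∀ x, 0 < φ x) (hdeg : ∀ x, (G.neighborSet x).Nonempty) (Θ : Set V) (t : ℕ) :
    omegaSeq G φ Θ t ⊆ ⋃ u ∈ Θ, component G (finalSet G φ Θ) u := by
  induction t with
  | zero =>
    exact fun u hu =>
      Set.mem_biUnion hu (mem_component_self (omegaSeq_subset_finalSet Θ 0 hu))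
  | succ t ih =>
    refine Set.union_subset ih fun x hx => ?_
    have hx_final : x ∈ finalSet G φ Θ := omegaSeq_subset_finalSet Θ (t + 1) (Or.inr hx)
    obtain ⟨y, hy, hxy⟩ := exists_adj_of_mem_cascade (hφ x) (hdeg x) hx
    obtain ⟨u, hu, hyu⟩ := Set.mem_iUnion₂.mp (ih hy)
    exact Set.mem_biUnion hu (mem_component_of_adj hx_final hxy hyu)

theorem finalSet_eq_union_components_general [∀ x, Finite (G.neighborSet x)]
    (hφ : ∀ x, 0 < φ x) (hdeg : ∀ x, (G.neighborSet x).Nonempty) (Θ : Set V) :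
    finalSet G φ Θ = ⋃ u ∈ Θ, component G (finalSet G φ Θ) u :=
  Set.Subset.antisymm (Set.iUnion_subset (omegaSeq_subset_biUnion_component hφ hdeg Θ))
    (Set.iUnion₂_subset fun _ _ => component_subset)

end Cascade

/-- Attribution of cascades to initial failures in the threshold model: if every
vertex has a neighbor and `Θ = {v, w}` with `v ≠ w`, then the final failed set
`Ω = F(Θ)` is the union of the connected components of `v` and of `w` in the
subgraph induced on `Ω`. -/
theorem finalSet_eq_union_components {V : Type*} [Fintype V] (G : SimpleGraph V)
    (φ : V → ℝ) (hφ : ∀ x, 0 < φ x ∧ φ x ≤ 1)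
    (hdeg : ∀ x, (G.neighborSet x).Nonempty)
    (v w : V) (hvw : v ≠ w) :
    finalSet G φ {v, w} =
      component G (finalSet G φ {v, w}) v ∪ component G (finalSet G φ {v, w}) w := by
  simpa only [Set.biUnion_pair] using
    finalSet_eq_union_components_general (fun x => (hφ x).1) hdeg {v, w}
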